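/- arXiv:1206.1008 — 4 statements merged into one kernel-verified Lean document; each statement's English description precedes it below -/
import Mathlib

section
/- Let k be a finite field and V a finite-dimensional k-vector space with dim V ≥ 1. The Drinfeld half-space Ω(V), i.e. the open subscheme of P(V) complementary to the union of all k-rational hyperplanes, is an affine scheme. -/
open AlgebraicGeometry CategoryTheory MvPolynomial Module

attribute [local instance] MvPolynomial.gradedAlgebra

/-- The projective space `P(V)` over `k` for an `m`-dimensional vector space `V`:
the Proj of the polynomial ring in `m` variables over `k` with its standard
grading (equivalently, of `Sym V`). -/
noncomputable abbrev projSpace (k : Type*) [Field k] (m : ℕ) : Scheme :=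
  Proj (homogeneousSubmodule (Fin m) k)

/-- The set of points of `P(V)` lying on no `k`-rational hyperplane, i.e. in the
complement of the zero locus of every nonzero linear form. -/
def drinfeldSet (k : Type*) [Field k] (m : ℕ) : Set (projSpace k m) :=
  {x | ∀ c : Fin m → k, c ≠ 0 →
    (∑ i, MvPolynomial.C (c i) * MvPolynomial.X i) ∉ x.asHomogeneousIdeal}

lemma isOpen_drinfeldSet (k : Type*) [Field k] [Fintype k] (m : ℕ) :
    IsOpen (drinfeldSet k m) := by
  have : drinfeldSet k m = ⋂ c : {c : Fin m → k // c ≠ 0},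
      (Proj.basicOpen (homogeneousSubmodule (Fin m) k)
        (∑ i, MvPolynomial.C (c.1 i) * MvPolynomial.X i) : Set (projSpace k m)) := by
    ext x
    simp only [drinfeldSet, Set.mem_setOf_eq, Set.mem_iInter, Subtype.forall]
    rfl
  rw [this]
  exact isOpen_iInter_of_finite fun c =>
    (Proj.basicOpen (homogeneousSubmodule (Fin m) k) _).isOpen

/-- The Drinfeld half-space `Ω(V)` as an open subset of `P(V)`. -/
def drinfeldOpens (k : Type*) [Field k] [Fintype k] (m : ℕ) : (projSpace k m).Opens :=
  ⟨drinfeldSet k m, isOpen_drinfeldSet k m⟩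

/-- The Drinfeld half-space `Ω(V)` as a scheme. -/
noncomputable abbrev drinfeldScheme (k : Type*) [Field k] [Fintype k] (m : ℕ) : Scheme :=
  (drinfeldOpens k m).toScheme

/-- The open immersion `ι : Ω(V) → P(V)`. -/
noncomputable def drinfeldι (k : Type*) [Field k] [Fintype k] (m : ℕ) :
    drinfeldScheme k m ⟶ projSpace k m :=
  (drinfeldOpens k m).ι

/-- The structure morphism `P(V) ⟶ Spec k`. -/
noncomputable def projStruct (k : Type*) [Field k] (m : ℕ) :
    projSpace k m ⟶ Spec (CommRingCat.of k) :=
  Proj.toSpecZero (homogeneousSubmodule (Fin m) k) ≫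
    Spec.map (CommRingCat.ofHom
      ((GradedRing.projZeroRingHom' (homogeneousSubmodule (Fin m) k)).comp
        (algebraMap k (MvPolynomial (Fin m) k))))

/-- The structure morphism `Ω(V) ⟶ Spec k`. -/
noncomputable def drinfeldStruct (k : Type*) [Field k] [Fintype k] (m : ℕ) :
    drinfeldScheme k m ⟶ Spec (CommRingCat.of k) :=
  drinfeldι k m ≫ projStruct k m

lemma isHomogeneous_sum_C_mul_X {σ R : Type*} [CommSemiring R] (s : Finset σ) (c : σ → R) :
    (∑ i ∈ s, C (c i) * X i : MvPolynomial σ R).IsHomogeneous 1 :=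
  IsHomogeneous.sum _ _ _ fun i _ => isHomogeneous_C_mul_X (c i) i

lemma drinfeldOpens_eq_iInf_basicOpen (k : Type*) [Field k] [Fintype k] (m : ℕ) :
    drinfeldOpens k m = ⨅ c : {c : Fin m → k // c ≠ 0},
      Proj.basicOpen (homogeneousSubmodule (Fin m) k) (∑ i, C (c.1 i) * X i) := by
  ext x
  simp only [TopologicalSpace.Opens.coe_iInf, Set.mem_iInter, Subtype.forall]
  rfl

lemma isAffineOpen_drinfeldOpens (k : Type*) [Field k] [Fintype k] (m : ℕ) [NeZero m] :
    IsAffineOpen (drinfeldOpens k m) := by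
  have : Nonempty {c : Fin m → k // c ≠ 0} := ⟨⟨1, one_ne_zero⟩⟩
  rw [drinfeldOpens_eq_iInf_basicOpen]
  -- `P(V)` is separated, so a nonempty finite intersection of affine opens is affine.
  exact .iInf fun c => Proj.isAffineOpen_basicOpen _ _
    ((mem_homogeneousSubmodule _ _).mpr (isHomogeneous_sum_C_mul_X _ c.1)) one_pos

/-- The Drinfeld half-space `Ω(V)`, the complement in `P(V)` of all
`k`-rational hyperplanes, is an affine scheme (here `dim V ≥ 1`). -/
theorem stmt_2 (k : Type*) [Field k] [Fintype k]
    (V : Type*) [AddCommGroup V] [Module k V] [FiniteDimensional k V]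
    (hV : 1 ≤ finrank k V) :
    IsAffine (drinfeldScheme k (finrank k V)) := by
  have : NeZero (finrank k V) := ⟨Nat.one_le_iff_ne_zero.mp hV⟩
  exact isAffineOpen_drinfeldOpens k (finrank k V)
end

section
/- Let k be a finite field, let t ≥ 2, let V be a k-vector space of dimension t+1, and let H ≤ V be a subspace of dimension t. Then the number of subspaces U ≤ V with 1 ≤ dim U ≤ t−1 which are not contained in H is at least the number of subspaces U ≤ H with 1 ≤ dim U ≤ t−2. In the paper's notation: ν(t) ≥ λ(t−1). -/
open Module

/-!
Fix a point `p` outside `H`. The map `L ↦ L ⊔ span {p}` sends subspaces of `H` to subspaces not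
contained in `H`, raises the dimension by at most one, and is injective because, by modularity,
`L` is recovered as `(L ⊔ span {p}) ⊓ H`.
-/

section Lattice

variable {α : Type*} [Lattice α] [OrderBot α] [IsModularLattice α] {a b c : α}

theorem sup_inf_eq_left_of_le_of_disjoint (hac : a ≤ c) (hbc : Disjoint b c) :
    (a ⊔ b) ⊓ c = a := by
  rw [sup_inf_assoc_of_le b hac, hbc.eq_bot, sup_bot_eq]

theorem injOn_sup_right_Iic_of_disjoint (hbc : Disjoint b c) :
    Set.InjOn (· ⊔ b) (Set.Iic c) :=
  Set.LeftInvOn.injOn (f₁' := (· ⊓ c)) fun _ hac ↦ sup_inf_eq_left_of_le_of_disjoint hac hbc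

end Lattice

section Subspace

open Submodule
open scoped Cardinal

variable {K V : Type*} [DivisionRing K] [AddCommGroup V] [Module K V]

theorem finrank_sup_span_singleton_le (L : Submodule K V) [FiniteDimensional K L] (p : V) :
    finrank K ↥(L ⊔ K ∙ p) ≤ finrank K L + 1 := by
  have finrank_point : finrank K (K ∙ p) ≤ 1 := by
    simpa using finrank_span_le_card (R := K) ({p} : Set V)
  calc finrank K ↥(L ⊔ K ∙ p)
      ≤ finrank K L + finrank K (K ∙ p) := finrank_add_le_finrank_add_finrank L (K ∙ p)
    _ ≤ finrank K L + 1 := by gcongr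

theorem stmt_4_general {H : Submodule K V} (hH : H ≠ ⊤) (d : ℕ) :
    #{U : Submodule K V // U ≤ H ∧ 1 ≤ finrank K U ∧ finrank K U ≤ d} ≤
      #{U : Submodule K V // (1 ≤ finrank K U ∧ finrank K U ≤ d + 1) ∧ ¬ U ≤ H} := by
  obtain ⟨p, -, hp⟩ := SetLike.exists_of_lt hH.lt_top
  have point_disjoint : Disjoint (K ∙ p) H := (disjoint_span_singleton_of_notMem hp).symm
  refine Cardinal.mk_le_of_injective (f := fun L ↦ ⟨L.1 ⊔ K ∙ p, ?_, ?_⟩) ?_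
  · obtain ⟨L, -, one_le, le_d⟩ := L
    have : FiniteDimensional K L := finite_of_finrank_pos one_le
    exact ⟨one_le.trans (finrank_mono le_sup_left),
      (finrank_sup_span_singleton_le L p).trans (by gcongr)⟩
  · exact fun join_le ↦ hp (join_le (mem_sup_right (mem_span_singleton_self p)))
  · exact fun L M join_eq ↦ Subtype.ext <|
      injOn_sup_right_Iic_of_disjoint point_disjoint L.2.1 M.2.1 (congrArg Subtype.val join_eq)

end Subspace

/-- ν(t) ≥ λ(t−1): the number of subspaces `U ≤ V` (with `dim V = t+1`)
satisfying `1 ≤ dim U ≤ t−1` and not contained in the hyperplane `H` is at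
least the number of subspaces `U ≤ H` with `1 ≤ dim U ≤ t−2`. -/
theorem stmt_4 (k : Type*) [Field k] [Fintype k] (t : ℕ) (ht : 2 ≤ t)
    (V : Type*) [AddCommGroup V] [Module k V] [FiniteDimensional k V]
    (hV : finrank k V = t + 1)
    (H : Submodule k V) (hH : finrank k H = t) :
    Nat.card {U : Submodule k V //
        U ≤ H ∧ 1 ≤ finrank k U ∧ finrank k U ≤ t - 2} ≤
      Nat.card {U : Submodule k V //
        (1 ≤ finrank k U ∧ finrank k U ≤ t - 1) ∧ ¬ U ≤ H} := by
  have hH_ne_top : H ≠ ⊤ := by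
    rintro rfl
    rw [finrank_top] at hH
    lia
  have : Finite V := Module.finite_of_finite k
  rw [show t - 1 = t - 2 + 1 by lia]
  exact Cardinal.toNat_le_toNat (stmt_4_general hH_ne_top (t - 2)) (Cardinal.lt_aleph0_of_finite _)
end

section
/- Let k be a finite field, let t ≥ 2, let V be a k-vector space of dimension t+1, and let H ≤ V be any subspace of dimension t. Then the number of subspaces U ≤ V with 1 ≤ dim U ≤ t−1 is strictly greater than 1 plus twice the number of subspaces U ≤ H with 1 ≤ dim U ≤ t−2. In the paper's notation: λ(t) − λ(t−1) > λ(t−1) + 1 for all t ≥ 2. -/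
/-!
Let `n = t - 2`. Enlarge `H` to a hyperplane `H'` and fix a vector `v` outside it. Split the nonzero
subspaces of `V` of dimension at most `n + 1` according to whether they contain `v`. Those avoiding
`v` include the nonzero subspaces of `H'` of dimension at most `n` and one more, of dimension
`n + 1`. Those containing `v` include `U ⊔ span v` for the same `U` and for `U = ⊥`, and these are
distinct because `U ↦ U ⊔ span v` is injective below `H'` by modularity. So each part is larger by
at least one than the family attached to `H`. Finiteness of the field only turns this inequality of
extended cardinalities into a strict one.
-/

open Module

theorem injOn_sup_right_Iic_of_disjoint_s5 {α : Type*} [Lattice α] [OrderBot α] [IsModularLattice α]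
    {a b : α} (h : Disjoint a b) : Set.InjOn (· ⊔ b) (Set.Iic a) :=
  Set.LeftInvOn.injOn (f₁' := (· ⊓ a)) fun c hc ↦ by
    simp only [sup_inf_assoc_of_le b hc, h.symm.eq_bot, sup_bot_eq]

section Subspaces

variable {k V : Type*} [DivisionRing k] [AddCommGroup V] [Module k V]
  {H K : Submodule k V} {v : V} {m n : ℕ}

theorem exists_between_finrank_eq [FiniteDimensional k V] (hHK : H ≤ K) (hHm : finrank k H ≤ m)
    (hmK : m ≤ finrank k K) : ∃ W, H ≤ W ∧ W ≤ K ∧ finrank k W = m := by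
  induction m, hHm using Nat.le_induction with
  | base => exact ⟨H, le_rfl, hHK, rfl⟩
  | succ m _ ih =>
    obtain ⟨W, hHW, hWK, rfl⟩ := ih (by omega)
    have hlt : W < K := hWK.lt_of_ne fun h ↦ by subst h; omega
    obtain ⟨v, hvK, hvW⟩ := SetLike.exists_of_lt hlt
    exact ⟨W ⊔ k ∙ v, le_sup_of_le_left hHW,
      sup_le hWK ((Submodule.span_singleton_le_iff_mem v K).2 hvK),
      Submodule.finrank_sup_span_singleton hvW⟩

/-- The nonzero subspaces of `H` of finite dimension at most `n`. Thus `λ(d)` counts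
`lowDimSubspaces (d - 1) H` for `H` of dimension `d + 1`. The bound `1 ≤ finrank` also excludes
infinite-dimensional subspaces, whose `finrank` is `0`. -/
def lowDimSubspaces (n : ℕ) (H : Submodule k V) : Set (Submodule k V) :=
  {U | U ≤ H ∧ 1 ≤ finrank k U ∧ finrank k U ≤ n}

theorem encard_lowDimSubspaces_add_one_le_notMem [FiniteDimensional k V] (hv : v ∉ H)
    (hn : n < finrank k H) :
    (lowDimSubspaces n H).encard + 1 ≤
      {U : Submodule k V | U ∈ lowDimSubspaces (n + 1) ⊤ ∧ v ∉ U}.encard := by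
  obtain ⟨W, -, hWH, hW⟩ := exists_between_finrank_eq (m := n + 1) (bot_le (a := H)) (by simp) hn
  have hW_notMem : W ∉ lowDimSubspaces n H := fun h ↦ absurd h.2.2 (by omega)
  rw [← Set.encard_insert_of_notMem hW_notMem]
  refine Set.encard_le_encard (Set.insert_subset ?_ ?_)
  · exact ⟨⟨le_top, by omega, hW.le⟩, fun h ↦ hv (hWH h)⟩
  · exact fun U ⟨hUH, hU_pos, hU_le⟩ ↦
      ⟨⟨le_top, hU_pos, hU_le.trans n.le_succ⟩, fun h ↦ hv (hUH h)⟩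

theorem encard_lowDimSubspaces_add_one_le_mem [FiniteDimensional k V] (hv : v ∉ H) :
    (lowDimSubspaces n H).encard + 1 ≤
      {U : Submodule k V | U ∈ lowDimSubspaces (n + 1) ⊤ ∧ v ∈ U}.encard := by
  have hbot_notMem : ⊥ ∉ lowDimSubspaces n H := fun h ↦ by simpa using h.2.1
  have hle : ∀ U ∈ insert ⊥ (lowDimSubspaces n H), U ≤ H ∧ finrank k U ≤ n := by
    rintro U (rfl | hU)
    · simp
    · exact ⟨hU.1, hU.2.2⟩
  have hinj := (injOn_sup_right_Iic_of_disjoint_s5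
    (Submodule.disjoint_span_singleton_of_notMem hv)).mono fun U hU ↦ (hle U hU).1
  rw [← Set.encard_insert_of_notMem hbot_notMem, ← hinj.encard_image]
  refine Set.encard_le_encard (Set.image_subset_iff.2 fun U hU ↦ ?_)
  obtain ⟨hUH, hUn⟩ := hle U hU
  have hrank : finrank k ↥(U ⊔ k ∙ v) = finrank k U + 1 :=
    Submodule.finrank_sup_span_singleton fun h ↦ hv (hUH h)
  exact ⟨⟨le_top, hrank ▸ Nat.le_add_left 1 _, hrank ▸ Nat.succ_le_succ hUn⟩,
    Submodule.mem_sup_right (Submodule.mem_span_singleton_self v)⟩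

theorem stmt_5_general (hH : H ≠ ⊤) (hn : n + 1 < finrank k V) :
    2 * ((lowDimSubspaces n H).encard + 1) ≤
      (lowDimSubspaces (n + 1) (⊤ : Submodule k V)).encard := by
  have : FiniteDimensional k V := FiniteDimensional.of_finrank_pos (by omega)
  have hH_lt := Submodule.finrank_lt hH
  obtain ⟨H', hHH', -, hH'⟩ := exists_between_finrank_eq (m := finrank k V - 1) (le_top (a := H))
    (by omega) (by simp)
  obtain ⟨v, hv⟩ : ∃ v, v ∉ H' := by
    by_contra! hall
    rw [Submodule.eq_top_iff'.2 hall, finrank_top] at hH'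
    omega
  have hmono : lowDimSubspaces n H ⊆ lowDimSubspaces n H' := fun U hU ↦ ⟨hU.1.trans hHH', hU.2⟩
  calc 2 * ((lowDimSubspaces n H).encard + 1)
      ≤ 2 * ((lowDimSubspaces n H').encard + 1) := by gcongr
    _ ≤ {U ∈ lowDimSubspaces (n + 1) ⊤ | v ∉ U}.encard +
        {U ∈ lowDimSubspaces (n + 1) ⊤ | v ∈ U}.encard := by
      rw [two_mul]
      exact add_le_add (encard_lowDimSubspaces_add_one_le_notMem hv (by omega))
        (encard_lowDimSubspaces_add_one_le_mem hv)
    _ = (lowDimSubspaces (n + 1) ⊤).encard :=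
      Set.encard_sdiff_add_encard_inter _ {U | v ∈ U}

theorem one_add_two_mul_ncard_lowDimSubspaces_lt [Finite k] (hH : H ≠ ⊤)
    (hn : n + 1 < finrank k V) :
    1 + 2 * (lowDimSubspaces n H).ncard <
      (lowDimSubspaces (n + 1) (⊤ : Submodule k V)).ncard := by
  have : FiniteDimensional k V := FiniteDimensional.of_finrank_pos (by omega)
  have : Finite V := Module.finite_of_finite k
  have hcount := stmt_5_general hH hn
  simp only [← Set.Finite.cast_ncard_eq (Set.toFinite _)] at hcount
  norm_cast at hcount
  omega

end Subspaces

/-- λ(t) > 2·λ(t−1) + 1 for t ≥ 2: the number of subspaces `U ≤ V`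
(with `dim V = t+1`) satisfying `1 ≤ dim U ≤ t−1` is strictly greater than
`1` plus twice the number of subspaces `U ≤ H` with `1 ≤ dim U ≤ t−2`, where
`H` is any hyperplane of `V`. -/
theorem stmt_5 (k : Type*) [Field k] [Fintype k] (t : ℕ) (ht : 2 ≤ t)
    (V : Type*) [AddCommGroup V] [Module k V] [FiniteDimensional k V]
    (hV : finrank k V = t + 1)
    (H : Submodule k V) (hH : finrank k H = t) :
    1 + 2 * Nat.card {U : Submodule k V //
        U ≤ H ∧ 1 ≤ finrank k U ∧ finrank k U ≤ t - 2} <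
      Nat.card {U : Submodule k V // 1 ≤ finrank k U ∧ finrank k U ≤ t - 1} := by
  obtain ⟨n, rfl⟩ := Nat.exists_eq_add_of_le' ht
  have hH_top : H ≠ ⊤ := by rintro rfl; simp [hV] at hH
  simpa [lowDimSubspaces, ← Nat.card_coe_set_eq, Set.coe_ofPred] using
    one_add_two_mul_ncard_lowDimSubspaces_lt (n := n) hH_top (by omega)
end

section
/- Let k be a finite field and let λ(d) denote the number of k-subspaces U of a (d+1)-dimensional k-vector space with 1 ≤ dim U ≤ d−1 (with λ(0) = 0). Let n ≥ 1 and let d, d' be integers with 0 ≤ d, d' ≤ n−1 and d < d' < n−1−d. Then λ(n−1−d) + λ(d) > λ(n−1−d') + λ(d') + 1. -/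
open Module

/-- `lam k d` is the number of nontrivial linear subspaces of codimension at
least 2 in the projective space `P^d` over `k`, i.e. the number of subspaces
`U` of a `(d+1)`-dimensional `k`-vector space with `1 ≤ dim U ≤ d − 1`
(for `d = 0` the condition is empty, so `lam k 0 = 0`). -/
noncomputable def lam (k : Type*) [Field k] (d : ℕ) : ℕ :=
  Nat.card {U : Submodule k (Fin (d + 1) → k) //
    1 ≤ finrank k U ∧ finrank k U ≤ d - 1}

/-!
Inside `L × W`, a subspace `U` of `W` gives the two subspaces `0 × U` and `L × U`; for a line `L`
the first has the dimension of `U` and the second has dimension one more. If `dim W = d + 1`, then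
`λ(d)` counts the `U` with `1 ≤ dim U ≤ d - 1`, but `0 × U` contributes to `λ(d + 1)` also when
`dim U = d`, and `L × U` also when `U = 0`. Hence `2 λ(d) + 2 ≤ λ(d + 1)` for `d ≥ 1`, and so `λ`
is monotone. Since both `d'` and `n - 1 - d'` are at most `n - 2 - d`, the single term
`λ(n - 1 - d)` already exceeds `λ(n - 1 - d') + λ(d') + 1`.
-/

/-- The number of subspaces of `V` whose dimension belongs to `s`. Allowing any set of dimensions
turns a shift of dimensions into a preimage of `s`. If infinitely many subspaces qualify, the
value is `0`. -/
noncomputable def subspaceCount (k V : Type*) [DivisionRing k] [AddCommGroup V] [Module k V]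
    (s : Set ℕ) : ℕ :=
  {U : Submodule k V | finrank k U ∈ s}.ncard

theorem submodule_prod_inj {R M N : Type*} [Semiring R] [AddCommMonoid M] [Module R M]
    [AddCommMonoid N] [Module R N] {p p' : Submodule R M} {q q' : Submodule R N} :
    p.prod q = p'.prod q' ↔ p = p' ∧ q = q' := by
  refine ⟨fun h ↦ ⟨?_, ?_⟩, fun ⟨hp, hq⟩ ↦ hp ▸ hq ▸ rfl⟩
  · simpa only [Submodule.prod_comap_inl] using congrArg (Submodule.comap (LinearMap.inl R M N)) h
  · simpa only [Submodule.prod_comap_inr] using congrArg (Submodule.comap (LinearMap.inr R M N)) h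

section DivisionRing

variable {k V W : Type*} [DivisionRing k] [AddCommGroup V] [Module k V]
  [AddCommGroup W] [Module k W]

theorem finrank_submodule_prod [FiniteDimensional k V] [FiniteDimensional k W]
    (p : Submodule k V) (q : Submodule k W) :
    finrank k (p.prod q) = finrank k p + finrank k q := by
  have hinj : Function.Injective (p.subtype.prodMap q.subtype) :=
    p.injective_subtype.prodMap q.injective_subtype
  rw [← finrank_prod, ← LinearMap.finrank_range_of_inj hinj, LinearMap.range_prodMap,
    p.range_subtype, q.range_subtype]

theorem exists_submodule_finrank_eq {m : ℕ} (hm : m ≤ finrank k V) :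
    ∃ U : Submodule k V, finrank k U = m := by
  obtain ⟨v, hv⟩ := exists_linearIndependent_of_le_finrank hm
  exact ⟨Submodule.span k (Set.range v), by simpa using finrank_span_eq_card hv⟩

theorem subspaceCount_congr (e : V ≃ₗ[k] W) (s : Set ℕ) :
    subspaceCount k V s = subspaceCount k W s :=
  Set.ncard_congr' <| (Submodule.orderIsoMapComap e).toEquiv.subtypeEquiv fun U ↦ by
    change finrank k U ∈ s ↔ finrank k (U.map (e : V →ₗ[k] W)) ∈ s
    rw [e.finrank_map_eq]

theorem subspaceCount_lt_of_subset [Finite V] {s t : Set ℕ} {m : ℕ} (hst : s ⊆ t)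
    (hmt : m ∈ t) (hms : m ∉ s) (hmV : m ≤ finrank k V) :
    subspaceCount k V s < subspaceCount k V t := by
  obtain ⟨U, rfl⟩ := exists_submodule_finrank_eq hmV
  exact Set.ncard_lt_ncard ⟨fun _ hU ↦ hst hU, fun hts ↦ hms (hts (a := U) hmt)⟩

theorem subspaceCount_add_le_subspaceCount_prod [Finite V] [Finite W] [Nontrivial V]
    (s : Set ℕ) :
    subspaceCount k W s + subspaceCount k W {i | finrank k V + i ∈ s} ≤
      subspaceCount k (V × W) s := by
  let A : Set (Submodule k W) := {U | finrank k U ∈ s}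
  let B : Set (Submodule k W) := {U | finrank k V + finrank k U ∈ s}
  let botProd : Submodule k W → Submodule k (V × W) := Submodule.prod ⊥
  let topProd : Submodule k W → Submodule k (V × W) := Submodule.prod ⊤
  have botProd_injective : Function.Injective botProd := fun _ _ h ↦ (submodule_prod_inj.mp h).2
  have topProd_injective : Function.Injective topProd := fun _ _ h ↦ (submodule_prod_inj.mp h).2
  have images_disjoint : Disjoint (botProd '' A) (topProd '' B) := by
    rw [Set.disjoint_left]
    rintro _ ⟨U, -, rfl⟩ ⟨U', -, h⟩
    exact top_ne_bot (submodule_prod_inj.mp h).1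
  have images_subset : botProd '' A ∪ topProd '' B ⊆ {U | finrank k U ∈ s} := by
    rintro _ (⟨U, hU, rfl⟩ | ⟨U, hU, rfl⟩)
    · change finrank k ((⊥ : Submodule k V).prod U) ∈ s
      rwa [finrank_submodule_prod, finrank_bot, zero_add]
    · change finrank k ((⊤ : Submodule k V).prod U) ∈ s
      rwa [finrank_submodule_prod, finrank_top]
  calc A.ncard + B.ncard = (botProd '' A ∪ topProd '' B).ncard := by
        rw [Set.ncard_union_eq images_disjoint, Set.ncard_image_of_injective A botProd_injective,
          Set.ncard_image_of_injective B topProd_injective]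
    _ ≤ subspaceCount k (V × W) s := Set.ncard_le_ncard images_subset

theorem two_mul_subspaceCount_Icc_add_two_le [Finite k] [Finite W] {m : ℕ}
    (hm : m < finrank k W) :
    2 * subspaceCount k W (Set.Icc 1 m) + 2 ≤ subspaceCount k (k × W) (Set.Icc 1 (m + 1)) := by
  have lt_Icc_succ : subspaceCount k W (Set.Icc 1 m) < subspaceCount k W (Set.Icc 1 (m + 1)) :=
    subspaceCount_lt_of_subset (m := m + 1) (Set.Icc_subset_Icc_right m.le_succ)
      (by simp) (by simp) hm
  have lt_shifted_Icc : subspaceCount k W (Set.Icc 1 m) <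
      subspaceCount k W {i | finrank k k + i ∈ Set.Icc 1 (m + 1)} := by
    refine subspaceCount_lt_of_subset (m := 0) (fun i hi ↦ ?_) (by simp) (by simp) (Nat.zero_le _)
    change finrank k k + i ∈ Set.Icc 1 (m + 1)
    rw [finrank_self, Set.mem_Icc]
    have := hi.2
    omega
  have := subspaceCount_add_le_subspaceCount_prod (k := k) (V := k) (W := W) (Set.Icc 1 (m + 1))
  omega

end DivisionRing

section Lam

variable (k : Type*) [Field k]

theorem lam_eq_subspaceCount (d : ℕ) :
    lam k d = subspaceCount k (Fin (d + 1) → k) (Set.Icc 1 (d - 1)) :=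
  rfl

theorem lam_zero : lam k 0 = 0 := by
  simp [lam_eq_subspaceCount, subspaceCount]

theorem two_mul_lam_add_two_le [Finite k] {d : ℕ} (hd : 1 ≤ d) :
    2 * lam k d + 2 ≤ lam k (d + 1) := by
  have hcount := two_mul_subspaceCount_Icc_add_two_le (k := k) (W := Fin (d + 1) → k) (m := d - 1)
    (by rw [finrank_fin_fun]; omega)
  rwa [subspaceCount_congr (Fin.consLinearEquiv k fun _ ↦ k), Nat.sub_add_cancel hd] at hcount

theorem lam_monotone [Finite k] : Monotone (lam k) := by
  refine monotone_nat_of_le_succ fun d ↦ ?_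
  obtain rfl | hd := d.eq_zero_or_pos
  · exact (lam_zero k).trans_le (Nat.zero_le _)
  · have := two_mul_lam_add_two_le k hd
    omega

end Lam

/-- If `d < d' < n−1−d` (with `0 ≤ d, d' ≤ n−1`), then
`λ(n−1−d) + λ(d) > λ(n−1−d') + λ(d') + 1`. -/
theorem stmt_6 (k : Type*) [Field k] [Fintype k] (n d d' : ℕ) (hn : 1 ≤ n)
    (hd : d ≤ n - 1) (hd' : d' ≤ n - 1) (h1 : d < d') (h2 : d' < n - 1 - d) :
    lam k (n - 1 - d') + lam k d' + 1 < lam k (n - 1 - d) + lam k d := by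
  obtain ⟨e, he⟩ : ∃ e, n - 1 - d = e + 1 := ⟨n - 1 - d - 1, by omega⟩
  have lam_sub_le : lam k (n - 1 - d') ≤ lam k e := lam_monotone k (by omega)
  have lam_le : lam k d' ≤ lam k e := lam_monotone k (by omega)
  have two_mul_lam_le : 2 * lam k e + 2 ≤ lam k (n - 1 - d) :=
    he ▸ two_mul_lam_add_two_le k (by omega)
  omega
end
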